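/- arXiv:2405.04703 — 2 statements merged into one kernel-verified Lean document; each statement's English description precedes it below -/
import Mathlib

section
/- For all positive integers a and b, the graph G(a,b) satisfies inf over edges x∼y of κ_LLY(x,y) = 1, has diameter 2, and is therefore Bonnet-Myers sharp. -/
open scoped Classical
open Finset

noncomputable section

/-- The degree of a vertex `x` in the graph `G`. -/
def deg {V : Type*} [Fintype V] (G : SimpleGraph V) (x : V) : ℕ :=
  (Finset.univ.filter (fun y => G.Adj x y)).card

/-- The diameter of `G`: the maximum of the combinatorial distance over all pairs of vertices. -/
def diam {V : Type*} [Fintype V] (G : SimpleGraph V) : ℕ :=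
  Finset.univ.sup (fun xy : V × V => G.dist xy.1 xy.2)

/-- The probability measure `μ_x^p` of the lazy simple random walk at `x` with idleness `p`. -/
def mu {V : Type*} [Fintype V] (G : SimpleGraph V) (p : ℝ) (x : V) : V → ℝ :=
  fun z => if z = x then p else if G.Adj x z then (1 - p) / (deg G x : ℝ) else 0

/-- The Wasserstein distance `W₁(μ₁, μ₂)` with respect to the combinatorial distance of `G`:
the infimum of the total transport cost over all transport plans from `μ₁` to `μ₂`. -/
def W1 {V : Type*} [Fintype V] (G : SimpleGraph V) (μ₁ μ₂ : V → ℝ) : ℝ :=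
  sInf {c : ℝ | ∃ π : V → V → ℝ,
    (∀ x y, 0 ≤ π x y ∧ π x y ≤ 1) ∧
    (∀ x, ∑ y, π x y = μ₁ x) ∧
    (∀ y, ∑ x, π x y = μ₂ y) ∧
    c = ∑ x, ∑ y, (G.dist x y : ℝ) * π x y}

/-- The `p`-Ollivier-Ricci curvature `κ_p(x,y) = 1 - W₁(μ_x^p, μ_y^p)`. -/
def kappa {V : Type*} [Fintype V] (G : SimpleGraph V) (p : ℝ) (x y : V) : ℝ :=
  1 - W1 G (mu G p x) (mu G p y)

/-- The Lin-Lu-Yau curvature `κ_LLY(x,y) = lim_{p→1} κ_p(x,y)/(1-p)`. -/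
def kappaLLY {V : Type*} [Fintype V] (G : SimpleGraph V) (x y : V) : ℝ :=
  Filter.limUnder (nhdsWithin 1 (Set.Iio 1)) (fun p => kappa G p x y / (1 - p))

/-- `G` is Bonnet-Myers sharp if the infimum of `κ_LLY` over the edges equals `2/diam(G)`. -/
def BMSharp {V : Type*} [Fintype V] (G : SimpleGraph V) : Prop :=
  sInf {r : ℝ | ∃ x y, G.Adj x y ∧ r = kappaLLY G x y} = 2 / (diam G : ℝ)

/-- `G` is obtained from the complete graph on its vertex set by deleting a matching
(a set of pairwise disjoint edges, encoded as a symmetric irreflexive relation in which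
every vertex has at most one partner). -/
def IsMatchingDeletionOfComplete {V : Type*} (G : SimpleGraph V) : Prop :=
  ∃ M : V → V → Prop, Symmetric M ∧ (∀ x, ¬ M x x) ∧
    (∀ x y z, M x y → M x z → y = z) ∧
    (∀ x y, G.Adj x y ↔ x ≠ y ∧ ¬ M x y)

/-- The graph `G(a,b)` on `2a+b` vertices `u_1, …, u_{2a}, v_1, …, v_b` (encoded as
`Fin (2a+b)`, with `u_i` the index `i-1` and `v_j` the index `2a+j-1`), in which two distinct
vertices are adjacent unless they form a pair `{u_{2i-1}, u_{2i}}`, i.e. `G(a,b)` is the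
complete graph `K_{2a+b}` with a matching of size `a` deleted. -/
def Gab (a b : ℕ) : SimpleGraph (Fin (2*a+b)) where
  Adj x y := x ≠ y ∧ ¬((x : ℕ) < 2*a ∧ (y : ℕ) < 2*a ∧ (x : ℕ)/2 = (y : ℕ)/2)
  symm := by
    constructor
    intro x y h
    exact ⟨h.1.symm, fun hc => h.2 ⟨hc.2.1, hc.1, hc.2.2.symm⟩⟩
  loopless := by constructor; intro x h; exact h.1 rfl

/-- The antitree `AT(a_1, …, a_N)` on the disjoint union of sets `V_1, …, V_N` with
`|V_k| = a_k` (0-indexed here: `V_k` is `Fin (a k)` for `k : Fin N`): two distinct vertices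
are adjacent iff they lie in the same set or in consecutive sets. -/
def antitree (N : ℕ) (a : Fin N → ℕ) : SimpleGraph (Σ k : Fin N, Fin (a k)) where
  Adj x y := x ≠ y ∧
    ((x.1 : ℕ) = (y.1 : ℕ) ∨ (x.1 : ℕ) + 1 = (y.1 : ℕ) ∨ (y.1 : ℕ) + 1 = (x.1 : ℕ))
  symm := by
    constructor
    intro x y h
    refine ⟨h.1.symm, ?_⟩
    rcases h.2 with h2 | h2 | h2
    · exact Or.inl h2.symm
    · exact Or.inr (Or.inr h2)
    · exact Or.inr (Or.inl h2)
  loopless := by constructor; intro x h; exact h.1 rfl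

section helpers
variable {V : Type*} [Fintype V]

lemma W1_eq (G : SimpleGraph V) (m1 m2 : V → ℝ) (ρ : V → V → ℝ) (f : V → ℝ) (C : ℝ)
    (h0 : ∀ x y, 0 ≤ ρ x y) (h1 : ∀ x, ∑ y, ρ x y ≤ m1 x) (hm : ∀ x, m1 x ≤ 1)
    (hd : ∀ x, ∑ y, ρ x y - ∑ y, ρ y x = m1 x - m2 x)
    (hC : ∑ x, ∑ y, (G.dist x y : ℝ) * ρ x y ≤ C)
    (hf : ∀ x y, f x - f y ≤ G.dist x y)
    (hfC : C ≤ ∑ x, f x * m1 x - ∑ x, f x * m2 x) : W1 G m1 m2 = C := by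
  set S := {c : ℝ | ∃ π : V → V → ℝ,
    (∀ x y, 0 ≤ π x y ∧ π x y ≤ 1) ∧
    (∀ x, ∑ y, π x y = m1 x) ∧
    (∀ y, ∑ x, π x y = m2 y) ∧
    c = ∑ x, ∑ y, (G.dist x y : ℝ) * π x y} with hS
  have hlow : ∀ c ∈ S, C ≤ c := by
    rintro c ⟨π, hp, hr, hc, rfl⟩
    refine hfC.trans ?_
    have e1 : ∑ x, f x * m1 x = ∑ x, ∑ y, f x * π x y := by
      refine Finset.sum_congr rfl fun x _ => ?_
      rw [← hr, Finset.mul_sum]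
    have e2 : ∑ x, f x * m2 x = ∑ x, ∑ y, f y * π x y := by
      rw [Finset.sum_comm]
      refine Finset.sum_congr rfl fun x _ => ?_
      rw [← hc, Finset.mul_sum]
    rw [e1, e2, ← Finset.sum_sub_distrib]
    refine Finset.sum_le_sum fun x _ => ?_
    rw [← Finset.sum_sub_distrib]
    refine Finset.sum_le_sum fun y _ => ?_
    rw [← sub_mul]
    exact mul_le_mul_of_nonneg_right (hf x y) (hp x y).1
  have hmem : ∑ x, ∑ y, (G.dist x y : ℝ) * ρ x y ∈ S := by
    let π : V → V → ℝ := fun x y => ρ x y + if x = y then m1 x - ∑ z, ρ x z else 0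
    have hn : ∀ x y, 0 ≤ π x y := by
      intro x y
      have a1 := h0 x y
      have a2 := h1 x
      simp only [π]
      split_ifs <;> linarith
    have hr : ∀ x, ∑ y, π x y = m1 x := by
      intro x
      simp only [π, Finset.sum_add_distrib, Finset.sum_ite_eq, Finset.mem_univ, if_true]
      ring
    refine ⟨π, fun x y => ⟨hn x y, ?_⟩, hr, ?_, ?_⟩
    · refine le_trans ?_ (hm x)
      rw [← hr x]
      exact Finset.single_le_sum (f := fun y => π x y) (fun i _ => hn x i) (Finset.mem_univ y)
    · intro y
      simp only [π, Finset.sum_add_distrib, Finset.sum_ite_eq', Finset.mem_univ, if_true]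
      linarith [hd y]
    · refine Finset.sum_congr rfl fun x _ => Finset.sum_congr rfl fun y _ => ?_
      by_cases h : x = y
      · subst h; simp
      · simp [π, h]
  apply le_antisymm
  · exact (csInf_le ⟨C, hlow⟩ hmem).trans hC
  · exact le_csInf ⟨_, hmem⟩ hlow

lemma W1_symm (G : SimpleGraph V) (m1 m2 : V → ℝ) : W1 G m1 m2 = W1 G m2 m1 := by
  unfold W1
  congr 1
  ext c
  constructor <;>
  · rintro ⟨π, hp, hr, hc, rfl⟩
    refine ⟨fun x y => π y x, fun x y => hp y x, hc, hr, ?_⟩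
    rw [Finset.sum_comm]
    simp only [SimpleGraph.dist_comm]

lemma kappaLLY_symm (G : SimpleGraph V) (x y : V) : kappaLLY G x y = kappaLLY G y x := by
  unfold kappaLLY kappa
  simp only [W1_symm G (mu G _ x) (mu G _ y)]

/-- The special transport of mass `A` from `x` to `y` and `c z` from `z` to `x'`. -/
lemma W1_eq' (G : SimpleGraph V) (m1 m2 : V → ℝ) (x y x' : V) (A C : ℝ) (c : V → ℝ) (f : V → ℝ)
    (hA : 0 ≤ A) (hc : ∀ z, 0 ≤ c z)
    (h1 : ∀ z, (if z = x then A else 0) + c z ≤ m1 z) (hm : ∀ x, m1 x ≤ 1)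
    (hd : ∀ z, (if z = x then A else 0) + c z - ((if z = y then A else 0) +
      if z = x' then ∑ w, c w else 0) = m1 z - m2 z)
    (hC : G.dist x y * A + ∑ z, G.dist z x' * c z ≤ C)
    (hf : ∀ x y, f x - f y ≤ G.dist x y)
    (hfC : C ≤ ∑ x, f x * m1 x - ∑ x, f x * m2 x) : W1 G m1 m2 = C := by
  have row : ∀ z, ∑ w, ((if z = x then if w = y then A else 0 else 0) + if w = x' then c z else 0)
      = (if z = x then A else 0) + c z := by
    intro z
    rw [Finset.sum_add_distrib]
    split_ifs <;> simp
  have col : ∀ w, ∑ z, ((if z = x then if w = y then A else 0 else 0) + if w = x' then c z else 0)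
      = (if w = y then A else 0) + if w = x' then ∑ z, c z else 0 := by
    intro w
    rw [Finset.sum_add_distrib]
    split_ifs <;> simp
  refine W1_eq G m1 m2
    (fun z w => (if z = x then if w = y then A else 0 else 0) + if w = x' then c z else 0)
    f C ?_ ?_ hm ?_ ?_ hf hfC
  · intro z w
    have := hc z
    split_ifs <;> linarith
  · intro z; rw [row]; exact h1 z
  · intro z; rw [row, col]; exact hd z
  · refine le_trans (le_of_eq ?_) hC
    simp only [mul_add, Finset.sum_add_distrib]
    congr 1
    · simp [Finset.sum_ite_eq']
    · simp

lemma kLLY_of (G : SimpleGraph V) (x y : V) (k : ℝ)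
    (h : ∀ p : ℝ, 1/2 < p → p < 1 → W1 G (mu G p x) (mu G p y) = 1 - k * (1 - p)) :
    kappaLLY G x y = k := by
  unfold kappaLLY
  apply Filter.Tendsto.limUnder_eq
  refine Filter.Tendsto.congr' ?_ tendsto_const_nhds
  have : Set.Ioo (1/2 : ℝ) 1 ∈ nhdsWithin (1:ℝ) (Set.Iio 1) :=
    Ioo_mem_nhdsLT (by norm_num)
  filter_upwards [this] with p hp
  unfold kappa
  rw [h p hp.1 hp.2]
  have : 1 - p ≠ 0 := by linarith [hp.2]
  field_simp
  ring

def isV (G : SimpleGraph V) (x : V) : Prop := ∀ z, G.Adj x z ↔ z ≠ x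
def isU (G : SimpleGraph V) (x x' : V) : Prop := x ≠ x' ∧ ∀ z, G.Adj x z ↔ z ≠ x ∧ z ≠ x'

lemma deg_V {G : SimpleGraph V} {x : V} (h : isV G x) : (deg G x : ℝ) = Fintype.card V - 1 := by
  have : deg G x + 1 = Fintype.card V := by
    unfold deg
    have : Finset.univ.filter (fun y => G.Adj x y) = Finset.univ.erase x := by
      ext z; simp [h z]
    rw [this]
    exact Finset.card_erase_add_one (Finset.mem_univ x)
  rw [← this]; push_cast; ring

lemma deg_U {G : SimpleGraph V} {x x' : V} (h : isU G x x') :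
    (deg G x : ℝ) = Fintype.card V - 2 := by
  have : deg G x + 1 + 1 = Fintype.card V := by
    unfold deg
    have : Finset.univ.filter (fun y => G.Adj x y) = (Finset.univ.erase x).erase x' := by
      ext z; simp [h.2 z, and_comm]
    rw [this, Finset.card_erase_add_one (by simp [h.1.symm]),
      Finset.card_erase_add_one (Finset.mem_univ x)]
    rfl
  rw [← this]; push_cast; ring

lemma mu_V {G : SimpleGraph V} {x : V} (h : isV G x) (p : ℝ) (z : V) :
    mu G p x z = if z = x then p else (1 - p) / (Fintype.card V - 1) := by
  unfold mu
  rw [deg_V h]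
  by_cases hz : z = x <;> simp [hz, h z]

lemma mu_U {G : SimpleGraph V} {x x' : V} (h : isU G x x') (p : ℝ) (z : V) :
    mu G p x z = if z = x then p else if z = x' then 0 else (1 - p) / (Fintype.card V - 2) := by
  unfold mu
  rw [deg_U h]
  by_cases hz : z = x
  · simp [hz]
  · have h2 := h.2 z
    by_cases hz' : z = x'
    · have : ¬ G.Adj x z := by rw [h2]; simp [hz']
      rw [if_neg hz, if_neg hz, if_neg this, if_pos hz']
    · rw [if_neg hz, if_neg hz, if_neg hz', if_pos (h2.2 ⟨hz, hz'⟩)]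

lemma dist_ge_one {G : SimpleGraph V} (hG : G.Connected) {x y : V} (h : x ≠ y) :
    (1:ℝ) ≤ G.dist x y := by
  exact_mod_cast hG.pos_dist_of_ne h

lemma dist_ge_two {G : SimpleGraph V} (hG : G.Connected) {x x' : V} (h : isU G x x') :
    2 ≤ G.dist x x' := by
  have h1 := hG.pos_dist_of_ne h.1
  have h2 : G.dist x x' ≠ 1 := by
    rw [Ne, SimpleGraph.dist_eq_one_iff_adj, h.2]; simp
  omega

lemma connected_of_V {G : SimpleGraph V} {c : V} (hc : isV G c) : G.Connected := by
  have hr : ∀ z, G.Reachable c z := by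
    intro z
    by_cases h : z = c
    · subst h; rfl
    · exact ((hc z).2 h).reachable
  have : Nonempty V := ⟨c⟩
  exact ⟨fun u v => (hr u).symm.trans (hr v)⟩

lemma dist_le_two {G : SimpleGraph V} {c : V} (hc : isV G c) (x y : V) : G.dist x y ≤ 2 := by
  have hG := connected_of_V hc
  have hr : ∀ z, G.dist c z ≤ 1 := by
    intro z
    by_cases h : z = c
    · subst h; simp
    · exact (SimpleGraph.dist_eq_one_iff_adj.2 ((hc z).2 h)).le
  have := hG.dist_triangle (u := x) (v := c) (w := y)
  have h1 := hr x
  have h2 := hr y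
  rw [SimpleGraph.dist_comm] at h1
  omega

lemma lip_U {G : SimpleGraph V} (hG : G.Connected) {x x' : V} (h : isU G x x') (z w : V) :
    ((if z = x then (1:ℝ) else 0) - if z = x' then 1 else 0) -
    ((if w = x then (1:ℝ) else 0) - if w = x' then 1 else 0) ≤ G.dist z w := by
  have h1 : (2:ℝ) ≤ G.dist x x' := by exact_mod_cast dist_ge_two hG h
  have h0 := h.1
  by_cases hzw : z = w
  · subst hzw; simp
  have h2 := dist_ge_one hG hzw
  by_cases a : z = x
  · by_cases b : w = x'
    · subst a b; simp [h0, h0.symm]; linarith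
    · subst a; simp only [h0, b, Ne.symm hzw, if_true, if_false]; linarith
  · by_cases b : w = x'
    · subst b; simp only [h0.symm, a, hzw, if_true, if_false]; linarith
    · simp only [a, b, if_false]; split_ifs <;> linarith

lemma sum_f (x x' : V) (m : V → ℝ) :
    ∑ z, ((if z = x then (1:ℝ) else 0) - if z = x' then 1 else 0) * m z = m x - m x' := by
  simp [sub_mul, Finset.sum_sub_distrib]

lemma curv_VV {G : SimpleGraph V} {x y : V} (hx : isV G x) (hy : isV G y) (hxy : x ≠ y)
    (hN : 3 ≤ Fintype.card V) : kappaLLY G x y = 1 + 1 / ((Fintype.card V : ℝ) - 1) := by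
  apply kLLY_of
  intro p hp hp1
  have hG := connected_of_V hx
  have hN' : (3:ℝ) ≤ Fintype.card V := by exact_mod_cast hN
  set N : ℝ := (Fintype.card V : ℝ)
  have hb : (1-p)/(N-1) ≤ (1-p)/2 := by
    apply div_le_div_of_nonneg_left <;> linarith
  have hb0 : 0 ≤ (1-p)/(N-1) := div_nonneg (by linarith) (by linarith)
  have hk : 1 - (1 + 1/(N-1)) * (1-p) = p - (1-p)/(N-1) := by ring
  rw [hk]
  set q := (1-p)/(N-1) with hq
  have m1 : ∀ z, mu G p x z = if z = x then p else q := mu_V hx p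
  have m2 : ∀ z, mu G p y z = if z = y then p else q := mu_V hy p
  refine W1_eq' G _ _ x y x (p - q) _ (fun _ => 0) (fun z => if z = x then 1 else 0)
    (by linarith) (fun _ => le_rfl) ?_ ?_ ?_ ?_ ?_ ?_
  · intro z; rw [m1]; split_ifs <;> linarith
  · intro z; rw [m1]; split_ifs <;> linarith
  · intro z; rw [m1, m2]
    by_cases a : z = x
    · subst a; simp [hxy]
    · by_cases b : z = y
      · simp [b, hxy.symm]
      · simp [a, b]
  · rw [SimpleGraph.dist_eq_one_iff_adj.2 ((hx y).2 hxy.symm)]; simp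
  · intro z w
    by_cases hzw : z = w
    · subst hzw; simp
    have h2 := dist_ge_one hG hzw
    split_ifs <;> linarith
  · simp only [ite_mul, one_mul, zero_mul, Finset.sum_ite_eq', Finset.mem_univ, if_true]
    simp [m1, m2, hxy]

lemma curv_UV {G : SimpleGraph V} {x x' y : V} (hx : isU G x x') (hy : isV G y) (hxy : x ≠ y)
    (hxy' : x' ≠ y) (hN : 3 ≤ Fintype.card V) (hs : isU G x' x) : kappaLLY G x y = 1 := by
  apply kLLY_of
  intro p hp hp1
  have hG := connected_of_V hy
  have hN' : (3:ℝ) ≤ Fintype.card V := by exact_mod_cast hN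
  have hcard : ∑ z : V, (if z = y then (0:ℝ) else if z = x' then 0 else 1) = Fintype.card V - 2 := by
    have : ∀ z : V, (if z = y then (0:ℝ) else if z = x' then 0 else 1) =
        1 - (if z = y then 1 else 0) - (if z = x' then 1 else 0) := by
      intro z
      by_cases a : z = y
      · subst a; simp [hxy'.symm]
      · by_cases b : z = x' <;> simp [a, b, hxy']
    simp only [this, Finset.sum_sub_distrib]
    simp
    ring
  set N : ℝ := (Fintype.card V : ℝ)
  set q1 := (1-p)/(N-1) with hq1
  set q2 := (1-p)/(N-2) with hq2
  have n1 : N - 1 ≠ 0 := by linarith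
  have n2 : N - 2 ≠ 0 := by linarith
  have e1 : q1 * (N-1) = 1 - p := by rw [hq1]; field_simp
  have e2 : q2 * (N-2) = 1 - p := by rw [hq2]; field_simp
  have q2b : q2 ≤ 1 - p := div_le_self (by linarith) (by linarith)
  have q2n : 0 ≤ q2 := div_nonneg (by linarith) (by linarith)
  have q1n : 0 ≤ q1 := div_nonneg (by linarith) (by linarith)
  have q12 : q1 ≤ q2 := by apply div_le_div_of_nonneg_left <;> linarith
  have m1 : ∀ z, mu G p x z = if z = x then p else if z = x' then 0 else q2 := mu_U hx p
  have m2 : ∀ z, mu G p y z = if z = y then p else q1 := mu_V hy p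
  have hxx := hx.1
  have key : (N-2) * (q2 - q1) = q1 := by linarith
  have hcs : ∑ z : V, (q2 - q1) * (if z = y then (0:ℝ) else if z = x' then 0 else 1) = q1 := by
    rw [← Finset.mul_sum, hcard]; linarith
  refine W1_eq' G _ _ x y x' (p - q2) _
    (fun z => (q2 - q1) * (if z = y then (0:ℝ) else if z = x' then 0 else 1))
    (fun z => (if z = x then 1 else 0) - if z = x' then 1 else 0)
    (by linarith) ?_ ?_ ?_ ?_ ?_ (lip_U hG hx) ?_
  · intro z; split_ifs <;> linarith
  · intro z; rw [m1]
    by_cases a : z = x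
    · subst a; simp [hxx, hxy]; linarith
    · by_cases b : z = x'
      · simp [b, hxx.symm]
      · simp only [a, b, if_false]; split_ifs <;> linarith
  · intro z; rw [m1]; split_ifs <;> linarith
  · intro z; rw [hcs, m1, m2]
    by_cases a : z = x
    · subst a; simp [hxx, hxy]
    · by_cases b : z = x'
      · simp [b, hxx.symm, hxy']
      · by_cases c : z = y
        · simp [c, hxy.symm, hxy'.symm]
        · simp [a, b, c]
  · rw [SimpleGraph.dist_comm, SimpleGraph.dist_eq_one_iff_adj.2 ((hy x).2 hxy)]
    have : ∀ z : V, (G.dist z x' : ℝ) * ((q2 - q1) * (if z = y then (0:ℝ) else if z = x' then 0 else 1))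
      ≤ (q2 - q1) * (if z = y then (0:ℝ) else if z = x' then 0 else 1) +
        if z = x then q2 - q1 else 0 := by
      intro z
      by_cases a : z = x
      · have : (G.dist z x' : ℝ) ≤ 2 := by exact_mod_cast dist_le_two hy z x'
        subst a; simp [hxx, hxy]; nlinarith
      · by_cases b : z = x'
        · subst b; simp [a]
        · have : G.dist z x' = 1 := by
            rw [SimpleGraph.dist_comm, SimpleGraph.dist_eq_one_iff_adj]
            exact (hs.2 z).2 ⟨b, a⟩
          simp [a, this]
    have := Finset.sum_le_sum (s := Finset.univ) fun z _ => this z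
    rw [Finset.sum_add_distrib, hcs] at this
    simp only [Finset.sum_ite_eq', Finset.mem_univ, if_true] at this
    refine (add_le_add_right this _).trans ?_
    push_cast
    linarith
  · rw [sum_f, sum_f]
    simp [m1, m2, hxx.symm, hxy, hxy']

lemma curv_UU {G : SimpleGraph V} {x x' y y' c : V} (hc : isV G c) (hx : isU G x x')
    (hy : isU G y y') (hs : isU G x' x) (hxy : x ≠ y)
    (hxy' : x' ≠ y) (hyx : y' ≠ x) (hyx' : x' ≠ y')
    (hN : 3 ≤ Fintype.card V) : kappaLLY G x y = 1 := by
  apply kLLY_of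
  intro p hp hp1
  have hG := connected_of_V hc
  have hN' : (3:ℝ) ≤ Fintype.card V := by exact_mod_cast hN
  set N : ℝ := (Fintype.card V : ℝ)
  set q2 := (1-p)/(N-2) with hq2
  have q2b : q2 ≤ 1 - p := div_le_self (by linarith) (by linarith)
  have q2n : 0 ≤ q2 := div_nonneg (by linarith) (by linarith)
  have m1 : ∀ z, mu G p x z = if z = x then p else if z = x' then 0 else q2 := mu_U hx p
  have m2 : ∀ z, mu G p y z = if z = y then p else if z = y' then 0 else q2 := mu_U hy p
  have hxx := hx.1
  have hyy := hy.1
  refine W1_eq' G _ _ x y x' (p - q2) _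
    (fun z => if z = y' then q2 else 0)
    (fun z => (if z = x then 1 else 0) - if z = x' then 1 else 0)
    (by linarith) ?_ ?_ ?_ ?_ ?_ (lip_U hG hx) ?_
  · intro z; split_ifs <;> linarith
  · intro z; rw [m1]
    by_cases a : z = x
    · subst a; simp [hyx.symm]; linarith
    · by_cases b : z = x'
      · simp [b, hxx.symm, hyx']
      · simp only [a, b, if_false]; split_ifs <;> linarith
  · intro z; rw [m1]; split_ifs <;> linarith
  · intro z; rw [m1, m2]
    simp only [Finset.sum_ite_eq', Finset.mem_univ, if_true]
    by_cases a : z = x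
    · subst a; simp [hxx, hxy, hyx.symm]
    · by_cases b : z = x'
      · simp [b, hxx.symm, hxy', hyx']
      · by_cases c : z = y
        · simp [c, hxy.symm, hxy'.symm, hyy]
        · by_cases d : z = y'
          · simp [d, hyx, hyx'.symm, hyy.symm]
          · simp [a, b, c, d]
  · rw [SimpleGraph.dist_eq_one_iff_adj.2 ((hx.2 y).2 ⟨hxy.symm, hxy'.symm⟩)]
    have : G.dist y' x' = 1 := by
      rw [SimpleGraph.dist_comm, SimpleGraph.dist_eq_one_iff_adj]
      exact (hs.2 _).2 ⟨hyx'.symm, hyx⟩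
    simp [this]
  · rw [sum_f, sum_f]
    simp [m1, m2, hxx.symm, hxy, hxy', hyx.symm, hyx']

end helpers

lemma Gab_V (a b : ℕ) (x : Fin (2*a+b)) (hx : 2*a ≤ (x:ℕ)) : isV (Gab a b) x := by
  intro z
  show (x ≠ z ∧ _) ↔ _
  constructor
  · rintro ⟨h, -⟩; exact h.symm
  · intro h; exact ⟨h.symm, by omega⟩

def partner (a b : ℕ) (x : Fin (2*a+b)) (hx : (x:ℕ) < 2*a) : Fin (2*a+b) :=
  ⟨4 * ((x:ℕ)/2) + 1 - x, by omega⟩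

lemma Gab_U (a b : ℕ) (x : Fin (2*a+b)) (hx : (x:ℕ) < 2*a) :
    isU (Gab a b) x (partner a b x hx) := by
  unfold partner
  constructor
  · rw [Ne, Fin.ext_iff]; dsimp only; omega
  · intro z
    show (x ≠ z ∧ _) ↔ _
    rw [Ne, Ne, Ne, Fin.ext_iff, Fin.ext_iff, Fin.ext_iff]
    dsimp only
    omega

lemma Gab_U' (a b : ℕ) (x : Fin (2*a+b)) (hx : (x:ℕ) < 2*a) :
    isU (Gab a b) (partner a b x hx) x := by
  have h : ((partner a b x hx : Fin _) : ℕ) < 2*a := by unfold partner; dsimp only; omega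
  have := Gab_U a b _ h
  convert this using 1
  unfold partner; rw [Fin.ext_iff]; dsimp only; omega

/-- For all positive integers `a`, `b`, the graph `G(a,b)` has infimal edge
curvature `1`, diameter `2`, and is therefore Bonnet-Myers sharp. -/
theorem stmt4 (a b : ℕ) (ha : 0 < a) (hb : 0 < b) :
    sInf {r : ℝ | ∃ x y, (Gab a b).Adj x y ∧ r = kappaLLY (Gab a b) x y} = 1 ∧
    diam (Gab a b) = 2 ∧
    BMSharp (Gab a b) := by
  have hN : 3 ≤ Fintype.card (Fin (2*a+b)) := by simp; omega
  have hcV : isV (Gab a b) ⟨2*a, by omega⟩ := Gab_V a b _ le_rfl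
  have hG := connected_of_V hcV
  have hUV : ∀ x y : Fin (2*a+b), (x:ℕ) < 2*a → 2*a ≤ (y:ℕ) → kappaLLY (Gab a b) x y = 1 := by
    intro x y hx hy
    refine curv_UV (Gab_U a b x hx) (Gab_V a b y hy) ?_ ?_ hN (Gab_U' a b x hx)
    · rw [Ne, Fin.ext_iff]; omega
    · rw [Ne, Fin.ext_iff]; unfold partner; dsimp only; omega
  have hinf : sInf {r : ℝ | ∃ x y, (Gab a b).Adj x y ∧ r = kappaLLY (Gab a b) x y} = 1 := by
    apply IsLeast.csInf_eq
    constructor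
    · refine ⟨⟨2*a, by omega⟩, ⟨0, by omega⟩, ?_, ?_⟩
      · rw [hcV, Ne, Fin.ext_iff]; dsimp only; omega
      · rw [kappaLLY_symm]
        exact (hUV _ _ (by dsimp only; omega) (by dsimp only; omega)).symm
    · rintro r ⟨x, y, hxy, rfl⟩
      rcases lt_or_ge (x:ℕ) (2*a) with hx | hx <;> rcases lt_or_ge (y:ℕ) (2*a) with hy | hy
      · have h2 := (Gab_U a b x hx).2 y
        rw [h2] at hxy
        obtain ⟨h3, h4⟩ := hxy
        refine (curv_UU hcV (Gab_U a b x hx) (Gab_U a b y hy) (Gab_U' a b x hx) h3.symm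
          h4.symm ?_ ?_ hN).ge
        all_goals
          rw [Ne, Fin.ext_iff] at *
          unfold partner at *
          dsimp only at *
          omega
      · exact (hUV x y hx hy).ge
      · rw [kappaLLY_symm]; exact (hUV y x hy hx).ge
      · rw [curv_VV (Gab_V a b x hx) (Gab_V a b y hy) hxy.1 hN]
        have hN' : (3:ℝ) ≤ Fintype.card (Fin (2*a+b)) := by exact_mod_cast hN
        have : 0 ≤ 1 / ((Fintype.card (Fin (2*a+b)) : ℝ) - 1) :=
          div_nonneg zero_le_one (by linarith)
        linarith
  have hdiam : diam (Gab a b) = 2 := by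
    unfold diam
    apply le_antisymm
    · exact Finset.sup_le fun xy _ => dist_le_two hcV _ _
    · have h0 : ((⟨0, by omega⟩ : Fin (2*a+b)) : ℕ) < 2*a := by dsimp only; omega
      refine (dist_ge_two hG (Gab_U a b _ h0)).trans ?_
      exact Finset.le_sup (f := fun xy : Fin (2*a+b) × Fin (2*a+b) => (Gab a b).dist xy.1 xy.2)
        (Finset.mem_univ (_, _))
  refine ⟨hinf, hdiam, ?_⟩
  unfold BMSharp
  rw [hinf, hdiam]
  norm_num
end
end

section
/- Let G=(V,E) be a Bonnet-Myers sharp graph of diameter 2, let x,y∈V with x∼y, and let p∈[1/(max(d_x,d_y)+1), 1]. Then W₁(μ_x^p, μ_y^p) ≤ p. -/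
open scoped Classical
open Finset

noncomputable section

def Pl {V : Type*} [Fintype V] (μ ν : V → ℝ) (π : V → V → ℝ) : Prop :=
  (∀ a b, 0 ≤ π a b) ∧ (∀ a, ∑ b, π a b = μ a) ∧ (∀ b, ∑ a, π a b = ν b)

def cst {V : Type*} [Fintype V] (G : SimpleGraph V) (π : V → V → ℝ) : ℝ :=
  ∑ a, ∑ b, (G.dist a b : ℝ) * π a b

lemma Pl.le_left {V : Type*} [Fintype V] {μ ν : V → ℝ} {π : V → V → ℝ} (h : Pl μ ν π) (a b : V) :
    π a b ≤ μ a := by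
  rw [← h.2.1 a]
  exact Finset.single_le_sum (f := fun b => π a b) (fun i _ => h.1 a i) (Finset.mem_univ b)

lemma W1_le {V : Type*} [Fintype V] (G : SimpleGraph V) {μ ν : V → ℝ} {π : V → V → ℝ}
    (h : Pl μ ν π) (h1 : ∀ a, μ a ≤ 1) : W1 G μ ν ≤ cst G π := by
  unfold W1
  apply csInf_le
  · refine ⟨0, ?_⟩
    rintro c ⟨σ, hσ, -, -, rfl⟩
    exact Finset.sum_nonneg fun a _ => Finset.sum_nonneg fun b _ =>
      mul_nonneg (Nat.cast_nonneg _) (hσ a b).1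
  · exact ⟨π, fun a b => ⟨h.1 a b, (h.le_left a b).trans (h1 a)⟩, h.2.1, h.2.2, rfl⟩

lemma le_W1 {V : Type*} [Fintype V] (G : SimpleGraph V) {μ ν : V → ℝ} {π₀ : V → V → ℝ}
    (h : Pl μ ν π₀) (h1 : ∀ a, μ a ≤ 1) (c : ℝ) (hc : ∀ π, Pl μ ν π → c ≤ cst G π) :
    c ≤ W1 G μ ν := by
  unfold W1
  apply le_csInf
  · exact ⟨_, π₀, fun a b => ⟨h.1 a b, (h.le_left a b).trans (h1 a)⟩, h.2.1, h.2.2, rfl⟩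
  · rintro _ ⟨σ, hσ, h2, h3, rfl⟩
    exact hc σ ⟨fun a b => (hσ a b).1, h2, h3⟩

lemma W1_symm_s5 {V : Type*} [Fintype V] (G : SimpleGraph V) (μ ν : V → ℝ) :
    W1 G μ ν = W1 G ν μ := by
  unfold W1
  congr 1
  ext c
  constructor
  · rintro ⟨σ, h1, h2, h3, rfl⟩
    refine ⟨fun a b => σ b a, fun a b => h1 b a, h3, h2, ?_⟩
    rw [Finset.sum_comm]
    simp only [G.dist_comm]
  · rintro ⟨σ, h1, h2, h3, rfl⟩
    refine ⟨fun a b => σ b a, fun a b => h1 b a, h3, h2, ?_⟩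
    rw [Finset.sum_comm]
    simp only [G.dist_comm]

lemma exists_scale {V : Type*} [Fintype V] (f : V → ℝ) (hf : ∀ a, 0 ≤ f a) (t : ℝ) (ht : 0 < t)
    (hs : t ≤ ∑ a, f a) : ∃ α : V → ℝ, (∀ a, 0 ≤ α a) ∧ (∀ a, α a ≤ f a) ∧ ∑ a, α a = t := by
  have hpos : 0 < ∑ a, f a := lt_of_lt_of_le ht hs
  refine ⟨fun a => f a * (t / ∑ a, f a), fun a => mul_nonneg (hf a) (by positivity), fun a => ?_, ?_⟩
  · exact mul_le_of_le_one_right (hf a) ((div_le_one hpos).2 hs)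
  · rw [← Finset.sum_mul]; field_simp

def swp {V : Type*} (π : V → V → ℝ) (u v : V) (α β : V → ℝ) (t : ℝ) : V → V → ℝ :=
  fun a b => π a b + t * (if a = u then 1 else 0) * (if b = v then 1 else 0)
    - α a * (if b = v then 1 else 0) - (if a = u then 1 else 0) * β b + α a * β b / t

lemma swap {V : Type*} [Fintype V] (G : SimpleGraph V) {μ ν : V → ℝ} {π : V → V → ℝ}
    (h : Pl μ ν π) (u v : V) (α β : V → ℝ) (t : ℝ) (ht : 0 < t)
    (ha : ∀ a, 0 ≤ α a) (hb : ∀ a, 0 ≤ β a) (ha1 : ∀ a, α a ≤ π a v) (hb1 : ∀ b, β b ≤ π u b)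
    (has : ∑ a, α a = t) (hbs : ∑ a, β a = t)
    (hd : ∀ a b, α a ≠ 0 → β b ≠ 0 → (G.dist u v + G.dist a b : ℝ) ≤ G.dist a v + G.dist u b) :
    Pl μ ν (swp π u v α β t) ∧ cst G (swp π u v α β t) ≤ cst G π := by
  have hat : ∀ a, α a ≤ t := fun a => has ▸
    Finset.single_le_sum (fun i _ => ha i) (Finset.mem_univ a)
  have hbt : ∀ a, β a ≤ t := fun a => hbs ▸
    Finset.single_le_sum (fun i _ => hb i) (Finset.mem_univ a)
  have key : ∀ a b, 0 ≤ α a * β b / t := fun a b => 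
    div_nonneg (mul_nonneg (ha a) (hb b)) ht.le
  refine ⟨⟨?_, ?_, ?_⟩, ?_⟩
  · intro a b
    have k := key a b
    unfold swp
    by_cases h1 : a = u <;> by_cases h2 : b = v
    · subst h1; subst h2
      have e : t - α a - β b + α a * β b / t = (t - α a) * (t - β b) / t := by
        field_simp; ring
      have : 0 ≤ (t - α a) * (t - β b) / t :=
        div_nonneg (mul_nonneg (by linarith [hat a]) (by linarith [hbt b])) ht.le
      simp only [if_true]
      linarith [h.1 a b]
    · subst h1
      simp only [if_true, if_neg h2]
      linarith [hb1 b]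
    · subst h2
      simp only [if_true, if_neg h1]
      linarith [ha1 a]
    · simp only [if_neg h1, if_neg h2]
      linarith [h.1 a b]
  · intro a
    simp only [swp, Finset.sum_add_distrib, Finset.sum_sub_distrib, ← Finset.mul_sum,
      ← Finset.sum_div, hbs, h.2.1 a]
    simp
    field_simp
    ring
  · intro b
    simp only [swp, Finset.sum_add_distrib, Finset.sum_sub_distrib, ← Finset.sum_mul,
      ← Finset.mul_sum, ← Finset.sum_div, has, h.2.2 b]
    simp
    field_simp
    ring
  · have e1 : cst G (swp π u v α β t) = cst G π + G.dist u v * t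
        - ∑ a, G.dist a v * α a - ∑ b, G.dist u b * β b
        + ∑ a, ∑ b, G.dist a b * (α a * β b / t) := by
      simp only [cst, swp, mul_add, mul_sub, Finset.sum_add_distrib, Finset.sum_sub_distrib]
      congr 1
      congr 1
      · congr 1
        · simp
        · simp
      · rw [Finset.sum_comm]
        simp
    have e2 : ∑ a, G.dist a v * α a = ∑ a, ∑ b, G.dist a v * (α a * β b / t) := by
      refine Finset.sum_congr rfl fun a _ => ?_
      rw [← Finset.mul_sum, ← Finset.sum_div, ← Finset.mul_sum, hbs]
      field_simp
    have e3 : ∑ b, G.dist u b * β b = ∑ a, ∑ b, G.dist u b * (α a * β b / t) := by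
      rw [Finset.sum_comm]
      refine Finset.sum_congr rfl fun b _ => ?_
      rw [← Finset.mul_sum, ← Finset.sum_div, ← Finset.sum_mul, has]
      field_simp
    have e4 : G.dist u v * t = ∑ a, ∑ b, G.dist u v * (α a * β b / t) := by
      simp only [← Finset.mul_sum, ← Finset.sum_div, ← Finset.sum_mul, has, hbs]
      field_simp
    have : ∑ a, ∑ b, (G.dist u v * (α a * β b / t) + G.dist a b * (α a * β b / t)) ≤
        ∑ a, ∑ b, (G.dist a v * (α a * β b / t) + G.dist u b * (α a * β b / t)) := by
      refine Finset.sum_le_sum fun a _ => Finset.sum_le_sum fun b _ => ?_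
      by_cases h1 : α a = 0
      · simp [h1]
      by_cases h2 : β b = 0
      · simp [h2]
      rw [← add_mul, ← add_mul]
      exact mul_le_mul_of_nonneg_right (hd a b h1 h2) (key a b)
    simp only [Finset.sum_add_distrib] at this
    rw [e1, e2, e3, e4]
    linarith

lemma diag {V : Type*} [Fintype V] (G : SimpleGraph V) (hconn : G.Connected)
    {μ ν : V → ℝ} {π : V → V → ℝ} (h : Pl μ ν π) (S : Finset V) :
    ∃ σ, Pl μ ν σ ∧ cst G σ ≤ cst G π ∧ ∀ z ∈ S, min (μ z) (ν z) ≤ σ z z := by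
  induction S using Finset.induction_on with
  | empty => exact ⟨π, h, le_rfl, by simp⟩
  | insert z S hz ih =>
    obtain ⟨σ, hσ, hc, hS⟩ := ih
    by_cases hm : min (μ z) (ν z) ≤ σ z z
    · refine ⟨σ, hσ, hc, fun w hw => ?_⟩
      rcases Finset.mem_insert.1 hw with rfl | hw
      · exact hm
      · exact hS w hw
    push Not at hm
    have ht : 0 < min (μ z) (ν z) - σ z z := by linarith
    obtain ⟨α, a0, a1, as⟩ := exists_scale (fun a => if a = z then 0 else σ a z)
      (fun a => by split_ifs; exacts [le_rfl, hσ.1 _ _]) _ ht (by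
        have : ∑ a, (if a = z then 0 else σ a z) = ν z - σ z z := by
          rw [← hσ.2.2 z, ← Finset.add_sum_erase _ _ (Finset.mem_univ z),
            ← Finset.add_sum_erase _ (fun a => σ a z) (Finset.mem_univ z)]
          simp only [if_true, zero_add, add_sub_cancel_left]
          exact Finset.sum_congr rfl fun a ha => if_neg (Finset.ne_of_mem_erase ha)
        rw [this]; linarith [min_le_right (μ z) (ν z)])
    obtain ⟨β, b0, b1, bs⟩ := exists_scale (fun a => if a = z then 0 else σ z a)
      (fun a => by split_ifs; exacts [le_rfl, hσ.1 _ _]) _ ht (by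
        have : ∑ a, (if a = z then 0 else σ z a) = μ z - σ z z := by
          rw [← hσ.2.1 z, ← Finset.add_sum_erase _ _ (Finset.mem_univ z),
            ← Finset.add_sum_erase _ (fun a => σ z a) (Finset.mem_univ z)]
          simp only [if_true, zero_add, add_sub_cancel_left]
          exact Finset.sum_congr rfl fun a ha => if_neg (Finset.ne_of_mem_erase ha)
        rw [this]; linarith [min_le_left (μ z) (ν z)])
    have az : α z = 0 := le_antisymm (by simpa using a1 z) (a0 z)
    have bz : β z = 0 := le_antisymm (by simpa using b1 z) (b0 z)
    obtain ⟨hP, hC⟩ := swap G hσ z z α β _ ht a0 b0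
      (fun a => (a1 a).trans (by split_ifs; exacts [hσ.1 _ _, le_rfl]))
      (fun a => (b1 a).trans (by split_ifs; exacts [hσ.1 _ _, le_rfl])) as bs
      (fun a b _ _ => by
        have := hconn.dist_triangle (u := a) (v := z) (w := b)
        rw [SimpleGraph.dist_self]; push_cast; rw [zero_add]; exact_mod_cast this)
    refine ⟨_, hP, hC.trans hc, fun w hw => ?_⟩
    by_cases hwz : w = z
    · subst hwz
      simp [swp, az, bz]
    · have hw' := (Finset.mem_insert.1 hw).resolve_left hwz
      have := hS w hw'
      have k : 0 ≤ α w * β w / (min (μ z) (ν z) - σ z z) :=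
        div_nonneg (mul_nonneg (a0 w) (b0 w)) ht.le
      simp only [swp, if_neg hwz]
      linarith

lemma sum_mu {V : Type*} [Fintype V] (G : SimpleGraph V) (p : ℝ) (x : V) (hx : 0 < deg G x) :
    ∑ z, mu G p x z = 1 := by
  have : ∀ z, mu G p x z = (if z = x then p else 0) + if G.Adj x z then (1 - p) / (deg G x : ℝ) else 0 := by
    intro z
    unfold mu
    by_cases h : z = x
    · subst h; simp
    · simp [h]
  simp only [this, Finset.sum_add_distrib]
  rw [← Finset.sum_filter (fun z => G.Adj x z), Finset.sum_const]
  have hx' : (deg G x : ℝ) ≠ 0 := by positivity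
  change _ + deg G x • _ = _
  simp
  field_simp
  ring

lemma mu_nonneg {V : Type*} [Fintype V] (G : SimpleGraph V) (p : ℝ) (h0 : 0 ≤ p) (h1 : p ≤ 1)
    (x z : V) : 0 ≤ mu G p x z := by
  unfold mu
  split_ifs
  · exact h0
  · exact div_nonneg (by linarith) (Nat.cast_nonneg _)
  · exact le_rfl

lemma mu_le {V : Type*} [Fintype V] (G : SimpleGraph V) (p : ℝ) (h0 : 0 ≤ p) (h1 : p ≤ 1)
    (x z : V) (hx : 0 < deg G x) : mu G p x z ≤ 1 := by
  rw [← sum_mu G p x hx]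
  exact Finset.single_le_sum (fun i _ => mu_nonneg G p h0 h1 x i) (Finset.mem_univ z)

lemma exists_Pl {V : Type*} [Fintype V] (G : SimpleGraph V) (p : ℝ) (h0 : 0 ≤ p) (h1 : p ≤ 1)
    (x y : V) (hx : 0 < deg G x) (hy : 0 < deg G y) : ∃ π, Pl (mu G p x) (mu G p y) π := by
  refine ⟨fun a b => mu G p x a * mu G p y b, fun a b => mul_nonneg (mu_nonneg G p h0 h1 x a)
    (mu_nonneg G p h0 h1 y b), fun a => ?_, fun b => ?_⟩
  · rw [← Finset.mul_sum, sum_mu G p y hy, mul_one]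
  · rw [← Finset.sum_mul, sum_mu G p x hx, one_mul]

lemma mu_mix {V : Type*} [Fintype V] (G : SimpleGraph V) (p l : ℝ) (x z : V) :
    mu G (l + (1 - l) * p) x z = l * (if z = x then 1 else 0) + (1 - l) * mu G p x z := by
  unfold mu
  split_ifs
  · ring
  · ring
  · ring

def dl {V : Type*} (x y : V) : V → V → ℝ :=
  fun a b => (if a = x then 1 else 0) * (if b = y then 1 else 0)

lemma cst_dl {V : Type*} [Fintype V] (G : SimpleGraph V) (x y : V) (r s : ℝ) (π : V → V → ℝ) :
    cst G (fun a b => r * dl x y a b + s * π a b) = r * G.dist x y + s * cst G π := by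
  have : ∀ a b, (G.dist a b : ℝ) * (r * dl x y a b + s * π a b)
    = r * (G.dist a b * dl x y a b) + s * (G.dist a b * π a b) := fun a b => by ring
  simp only [cst, this, Finset.sum_add_distrib, ← Finset.mul_sum]
  simp [dl]

lemma sum_dl {V : Type*} [Fintype V] (x y : V) (r s : ℝ) (π : V → V → ℝ) (a : V) :
    ∑ b, (r * dl x y a b + s * π a b) = r * (if a = x then 1 else 0) + s * ∑ b, π a b := by
  simp only [Finset.sum_add_distrib, ← Finset.mul_sum]
  simp [dl]

lemma sum_dl' {V : Type*} [Fintype V] (x y : V) (r s : ℝ) (π : V → V → ℝ) (b : V) :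
    ∑ a, (r * dl x y a b + s * π a b) = r * (if b = y then 1 else 0) + s * ∑ a, π a b := by
  simp only [Finset.sum_add_distrib, ← Finset.mul_sum]
  simp [dl]

lemma upper {V : Type*} [Fintype V] (G : SimpleGraph V) (p l : ℝ) (h0 : 0 ≤ p) (h1 : p ≤ 1)
    (l0 : 0 ≤ l) (l1 : l ≤ 1) (x y : V) (hxy : G.Adj x y)
    (hx : 0 < deg G x) (π : V → V → ℝ) (h : Pl (mu G p x) (mu G p y) π) :
    W1 G (mu G (l + (1 - l) * p) x) (mu G (l + (1 - l) * p) y) ≤ l + (1 - l) * cst G π := by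
  have hP : Pl (mu G (l + (1 - l) * p) x) (mu G (l + (1 - l) * p) y)
      (fun a b => l * dl x y a b + (1 - l) * π a b) := by
    refine ⟨fun a b => ?_, fun a => ?_, fun b => ?_⟩
    · have : 0 ≤ dl x y a b := by unfold dl; positivity
      exact add_nonneg (mul_nonneg l0 this) (mul_nonneg (by linarith) (h.1 a b))
    · rw [sum_dl, h.2.1, mu_mix]
    · rw [sum_dl', h.2.2, mu_mix]
  refine (W1_le G hP fun a => mu_le G _ ?_ ?_ x a hx).trans ?_
  · nlinarith
  · nlinarith
  · rw [cst_dl, SimpleGraph.dist_eq_one_iff_adj.2 hxy]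
    simp

lemma lower {V : Type*} [Fintype V] (G : SimpleGraph V) (hconn : G.Connected)
    (p l : ℝ) (h0 : 0 ≤ p) (h1 : p ≤ 1)
    (l0 : 0 ≤ l) (l1 : l < 1) (x y : V) (hxy : G.Adj x y)
    (hy : 0 < deg G y) (hle : deg G y ≤ deg G x) (hp : (1 - p) / deg G x ≤ p)
    (π : V → V → ℝ)
    (h : Pl (mu G (l + (1 - l) * p) x) (mu G (l + (1 - l) * p) y) π) :
    l + (1 - l) * W1 G (mu G p x) (mu G p y) ≤ cst G π := by
  have hx : 0 < deg G x := by omega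
  have hx' : (0:ℝ) < deg G x := by exact_mod_cast hx
  have hy' : (0:ℝ) < deg G y := by exact_mod_cast hy
  have hle' : (deg G y : ℝ) ≤ deg G x := by exact_mod_cast hle
  have dxy := SimpleGraph.dist_eq_one_iff_adj.2 hxy
  suffices hs : ∃ σ, Pl (mu G (l + (1 - l) * p) x) (mu G (l + (1 - l) * p) y) σ ∧
      cst G σ ≤ cst G π ∧ l ≤ σ x y by
    obtain ⟨σ, hσ, hc, hl⟩ := hs
    have e : (1 - l) ≠ 0 := by linarith
    have hP : Pl (mu G p x) (mu G p y)
        (fun a b => (-l / (1 - l)) * dl x y a b + (1 / (1 - l)) * σ a b) := by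
      refine ⟨fun a b => ?_, fun a => ?_, fun b => ?_⟩
      · have : (-l / (1 - l)) * dl x y a b + (1 / (1 - l)) * σ a b
          = (σ a b - l * dl x y a b) / (1 - l) := by ring
        dsimp only
        rw [this]
        refine div_nonneg ?_ (by linarith)
        unfold dl
        by_cases h1 : a = x <;> by_cases h2 : b = y
        · subst h1; subst h2; simpa using hl
        all_goals simpa [h1, h2] using hσ.1 _ _
      · rw [sum_dl, hσ.2.1, mu_mix]; field_simp; ring
      · rw [sum_dl', hσ.2.2, mu_mix]; field_simp; ring
    have := W1_le G hP fun a => mu_le G _ h0 h1 x a hx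
    rw [cst_dl, dxy] at this
    have h2 := mul_le_mul_of_nonneg_left this (by linarith : 0 ≤ 1 - l)
    have e3 : (1 - l) * (-l / (1 - l) * ((1:ℕ):ℝ) + 1 / (1 - l) * cst G σ) = -l + cst G σ := by
      push_cast; field_simp
    rw [e3] at h2
    linarith
  obtain ⟨σ, hσ, hc, hd⟩ := diag G hconn h Finset.univ
  by_cases hl : l ≤ σ x y
  · exact ⟨σ, hσ, hc, hl⟩
  push Not at hl
  set q := l + (1 - l) * p with hq
  have q0 : 0 ≤ q := by nlinarith
  have q1 : q ≤ 1 := by nlinarith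
  have hqp : (1 - q) / deg G x ≤ q - l := by
    have : (1 - q) / deg G x = (1 - l) * ((1 - p) / deg G x) := by rw [hq]; ring
    rw [this, hq]
    have := mul_le_mul_of_nonneg_left hp (by linarith : 0 ≤ 1 - l)
    linarith
  have myy : mu G q y y = q := by simp [mu]
  have mxx : mu G q x x = q := by simp [mu]
  have mxy : mu G q x y = (1 - q) / deg G x := by simp [mu, hxy, hxy.ne']
  -- vertices which keep all their mass
  have keep : ∀ z w, z ≠ w → mu G q x z ≤ mu G q y z → σ z w = 0 := by
    intro z w hzw hm
    have h3 := hd z (Finset.mem_univ z)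
    rw [min_eq_left hm, ← hσ.2.1 z, ← Finset.add_sum_erase _ _ (Finset.mem_univ z)] at h3
    have h4 := Finset.single_le_sum (f := fun b => σ z b) (s := Finset.univ.erase z)
      (fun i _ => hσ.1 z i) (Finset.mem_erase.2 ⟨hzw.symm, Finset.mem_univ w⟩)
    have := hσ.1 z w
    linarith
  have ayy : σ y y ≤ (1 - q) / deg G x := mxy ▸ hσ.le_left y y
  have far : ∀ a, a ≠ x → a ≠ y → σ a y ≠ 0 → G.Adj x a ∧ ¬ G.Adj y a := by
    intro a hax hay hne
    have h5 : G.Adj x a := by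
      by_contra hna
      apply hne
      have := hσ.le_left a y
      simp [mu, hax, hna] at this
      exact le_antisymm this (hσ.1 _ _)
    refine ⟨h5, fun h6 => hne (keep a y hay ?_)⟩
    simp only [mu, if_neg hax, if_neg hay, if_pos h5, if_pos h6]
    exact div_le_div_of_nonneg_left (by linarith) hy' hle'
  have ht : 0 < l - σ x y := by linarith
  obtain ⟨α, a0, a1, as⟩ := exists_scale (fun a => if a = x ∨ a = y then 0 else σ a y)
    (fun a => by split_ifs; exacts [le_rfl, hσ.1 _ _]) _ ht (by
      have h7 : ∑ a, ((if a = x ∨ a = y then 0 else σ a y) + (if a = x then σ x y else 0)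
          + (if a = y then σ y y else 0)) = q := by
        rw [← myy, ← hσ.2.2 y]
        refine Finset.sum_congr rfl fun a _ => ?_
        by_cases e1 : a = x
        · subst e1; simp [hxy.ne]
        · by_cases e2 : a = y
          · subst e2; simp [e1]
          · simp [e1, e2]
      simp only [Finset.sum_add_distrib] at h7
      simp only [Finset.sum_ite_eq', Finset.mem_univ, if_true] at h7
      linarith)
  obtain ⟨β, b0, b1, bs⟩ := exists_scale (fun b => if b = y then 0 else σ x b)
    (fun a => by split_ifs; exacts [le_rfl, hσ.1 _ _]) _ ht (by
      have h7 : ∑ b, ((if b = y then 0 else σ x b) + (if b = y then σ x y else 0)) = q := by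
        rw [← mxx, ← hσ.2.1 x]
        refine Finset.sum_congr rfl fun b _ => ?_
        by_cases e1 : b = y
        · subst e1; simp
        · simp [e1]
      simp only [Finset.sum_add_distrib] at h7
      simp only [Finset.sum_ite_eq', Finset.mem_univ, if_true] at h7
      have : 0 ≤ (1 - q) / deg G x := div_nonneg (by linarith) hx'.le
      linarith)
  have ax : α x = 0 := le_antisymm (by simpa using a1 x) (a0 x)
  have ay : α y = 0 := le_antisymm (by simpa using a1 y) (a0 y)
  have hby : β y = 0 := le_antisymm (by simpa using b1 y) (b0 y)
  obtain ⟨hP, hC⟩ := swap G hσ x y α β _ ht a0 b0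
    (fun a => (a1 a).trans (by split_ifs; exacts [hσ.1 _ _, le_rfl]))
    (fun a => (b1 a).trans (by split_ifs; exacts [hσ.1 _ _, le_rfl])) as bs
    (fun a b ha hb => by
      have hax : a ≠ x := fun e => ha (e ▸ ax)
      have hay : a ≠ y := fun e => ha (e ▸ ay)
      have hne : σ a y ≠ 0 := by
        intro e
        apply ha
        have := a1 a
        simp only [hax, hay, or_self, if_false, e] at this
        exact le_antisymm this (a0 a)
      obtain ⟨f1, f2⟩ := far a hax hay hne
      have t1 := hconn.dist_triangle (u := a) (v := x) (w := b)
      have t2 : G.dist a x = 1 := SimpleGraph.dist_eq_one_iff_adj.2 f1.symm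
      have t3 : G.dist a y ≠ 0 := fun e => hay (hconn.dist_eq_zero_iff.1 e)
      have t4 : G.dist a y ≠ 1 := fun e => f2 (SimpleGraph.dist_eq_one_iff_adj.1 e).symm
      have : G.dist x y + G.dist a b ≤ G.dist a y + G.dist x b := by omega
      exact_mod_cast this)
  refine ⟨_, hP, hC.trans hc, ?_⟩
  simp [swp, ax, hby]

lemma main_aux {V : Type*} [Fintype V] (G : SimpleGraph V) (hconn : G.Connected)
    (x y : V) (hxy : G.Adj x y) (hle : deg G y ≤ deg G x)
    (hK : 1 ≤ kappaLLY G x y)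
    (p : ℝ) (hp0 : 1 / ((deg G x : ℝ) + 1) ≤ p) (hp1 : p ≤ 1) :
    W1 G (mu G p x) (mu G p y) ≤ p := by
  have hy : 0 < deg G y := Finset.card_pos.2 ⟨x, by simpa using hxy.symm⟩
  have hx : 0 < deg G x := by omega
  have hx' : (0:ℝ) < deg G x := by exact_mod_cast hx
  have h0 : 0 ≤ p := le_trans (by positivity) hp0
  have hp : (1 - p) / deg G x ≤ p := by
    rw [div_le_iff₀ (by positivity)] at hp0
    rw [div_le_iff₀ hx']
    linarith
  rcases eq_or_lt_of_le hp1 with rfl | hp1'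
  · obtain ⟨π, hπ⟩ := exists_Pl G 1 h0 hp1 x y hx hy
    have := upper G 1 1 h0 le_rfl zero_le_one le_rfl x y hxy hx π hπ
    simpa using this
  set W := W1 G (mu G p x) (mu G p y) with hW
  have hlim : kappaLLY G x y = (1 - W) / (1 - p) := by
    unfold kappaLLY
    apply Filter.Tendsto.limUnder_eq
    refine Filter.Tendsto.congr' ?_ tendsto_const_nhds
    have : Set.Ioo p 1 ∈ nhdsWithin (1:ℝ) (Set.Iio 1) := Ioo_mem_nhdsLT hp1'
    filter_upwards [this] with q hq
    obtain ⟨l, hl⟩ : ∃ l, l = (q - p) / (1 - p) := ⟨_, rfl⟩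
    have e : 1 - p ≠ 0 := by linarith
    have e' : 1 - q ≠ 0 := by linarith [hq.2]
    have hql : q = l + (1 - l) * p := by rw [hl]; field_simp; ring
    have l0 : 0 ≤ l := hl ▸ div_nonneg (by linarith [hq.1]) (by linarith)
    have l1 : l < 1 := by rw [hl, div_lt_one (by linarith)]; linarith [hq.2]
    have hWq : W1 G (mu G q x) (mu G q y) = l + (1 - l) * W := by
      apply le_antisymm
      · have : (W1 G (mu G q x) (mu G q y) - l) / (1 - l) ≤ W := by
          obtain ⟨π, hπ⟩ := exists_Pl G p h0 hp1 x y hx hy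
          refine le_W1 G hπ (fun a => mu_le G _ h0 hp1 x a hx) _ fun σ hσ => ?_
          rw [div_le_iff₀ (by linarith), hql]
          linarith [upper G p l h0 hp1 l0 l1.le x y hxy hx σ hσ]
        rw [div_le_iff₀ (by linarith)] at this
        linarith
      · have q0 : 0 ≤ q := by linarith [hq.1]
        obtain ⟨π, hπ⟩ := exists_Pl G q q0 hq.2.le x y hx hy
        refine le_W1 G hπ (fun a => mu_le G _ q0 hq.2.le x a hx) _ fun σ hσ => ?_
        rw [hql] at hσ
        exact lower G hconn p l h0 hp1 l0 l1 x y hxy hy hle hp σ hσ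
    unfold kappa
    rw [hWq]
    have e2 : 1 - q = (1 - l) * (1 - p) := by rw [hql]; ring
    have e3 : 1 - l ≠ 0 := by linarith
    rw [e2]
    field_simp
    ring
  rw [hlim, le_div_iff₀ (by linarith)] at hK
  linarith

/-- In a Bonnet-Myers sharp graph of diameter 2, for any edge `x ∼ y` and any
idleness `p ∈ [1/(max(d_x,d_y)+1), 1]` we have `W₁(μ_x^p, μ_y^p) ≤ p`. -/
theorem stmt5 {V : Type*} [Fintype V] (G : SimpleGraph V) (hconn : G.Connected)
    (hdiam : diam G = 2) (hBM : BMSharp G) (x y : V) (hxy : G.Adj x y)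
    (p : ℝ) (hp : p ∈ Set.Icc (1 / ((max (deg G x) (deg G y) : ℝ) + 1)) 1) :
    W1 G (mu G p x) (mu G p y) ≤ p := by
  have hge : ∀ u v, G.Adj u v → 1 ≤ kappaLLY G u v := by
    intro u v huv
    have h1 : sInf {r : ℝ | ∃ x y, G.Adj x y ∧ r = kappaLLY G x y} = 1 := by
      have := hBM
      unfold BMSharp at this
      rw [this, hdiam]; norm_num
    rw [← h1]
    apply csInf_le
    · refine Set.Finite.bddBelow ?_
      refine (Set.finite_range fun q : V × V => kappaLLY G q.1 q.2).subset ?_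
      rintro r ⟨a, b, -, rfl⟩
      exact ⟨(a, b), rfl⟩
    · exact ⟨u, v, huv, rfl⟩
  rcases le_total (deg G y) (deg G x) with h | h
  · have h' : (deg G y : ℝ) ≤ deg G x := by exact_mod_cast h
    rw [max_eq_left h'] at hp
    exact main_aux G hconn x y hxy h (hge x y hxy) p hp.1 hp.2
  · have h' : (deg G x : ℝ) ≤ deg G y := by exact_mod_cast h
    rw [max_eq_right h'] at hp
    rw [W1_symm_s5]
    exact main_aux G hconn y x hxy.symm h (hge y x hxy.symm) p hp.1 hp.2
end
end
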